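/- There exists a function C : ℝ × ℝ → ℝ such that for every T > 0 and every smooth solution u of the 1-dimensional Schrödinger flow with Neumann boundary conditions on [0,T] with initial data u₀ = u(·,0), one has sup_{t ∈ [0,T]} ( ‖u(·,t)‖²_{H⁵} + ‖∂_t u(·,t)‖²_{H³} + ‖∂_t²u(·,t)‖²_{H¹} ) ≤ C(‖u₀‖_{H⁵}, T). -/

import Mathlib

open MeasureTheory Set

noncomputable section

abbrev E3 := EuclideanSpace ℝ (Fin 3)

/-- The cross product on `EuclideanSpace ℝ (Fin 3)`. -/
def cross3 (a b : E3) : E3 :=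
  (WithLp.equiv 2 (Fin 3 → ℝ)).symm
    (crossProduct ((WithLp.equiv 2 (Fin 3 → ℝ)) a) ((WithLp.equiv 2 (Fin 3 → ℝ)) b))

/-- Partial derivative in the space variable of `u = u x t`. -/
def pdx (u : ℝ → ℝ → E3) : ℝ → ℝ → E3 := fun x t => deriv (fun y => u y t) x

/-- Partial derivative in the time variable of `u = u x t`. -/
def pdt (u : ℝ → ℝ → E3) : ℝ → ℝ → E3 := fun x t => deriv (fun s => u x s) t

/-- `u` is a smooth solution of the 1-dimensional Schrödinger flow with Neumann
boundary conditions on `[0,1] × [0,T]`. -/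
def IsSol (T : ℝ) (u : ℝ → ℝ → E3) : Prop :=
  ContDiff ℝ (⊤ : ℕ∞) (fun p : ℝ × ℝ => u p.1 p.2) ∧
  (∀ x ∈ Icc (0:ℝ) 1, ∀ t ∈ Icc (0:ℝ) T, ‖u x t‖ = 1) ∧
  (∀ x ∈ Icc (0:ℝ) 1, ∀ t ∈ Icc (0:ℝ) T, pdt u x t = cross3 (u x t) (pdx (pdx u) x t)) ∧
  (∀ t ∈ Icc (0:ℝ) T, pdx u 0 t = 0 ∧ pdx u 1 t = 0)

/-- Squared `L²` norm on `[0,1]`. -/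
def L2sq (f : ℝ → E3) : ℝ := ∫ x in (0:ℝ)..1, ‖f x‖ ^ 2

/-- Squared `H^k` Sobolev norm on `[0,1]`. -/
def Hsq (k : ℕ) (f : ℝ → E3) : ℝ :=
  ∑ j ∈ Finset.range (k + 1), ∫ x in (0:ℝ)..1, ‖deriv^[j] f x‖ ^ 2

open scoped ContDiff Topology

/-- joint smoothness -/
def Sm (f : ℝ → ℝ → E3) : Prop := ContDiff ℝ (⊤ : ℕ∞) (fun p : ℝ × ℝ => f p.1 p.2)

lemma Sm.hasDerivAt_x {f : ℝ → ℝ → E3} (hf : Sm f) (x t : ℝ) :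
    HasDerivAt (fun y => f y t) (fderiv ℝ (fun p : ℝ × ℝ => f p.1 p.2) (x, t) (1, 0)) x := by
  have h1 : HasFDerivAt (fun p : ℝ × ℝ => f p.1 p.2)
      (fderiv ℝ (fun p : ℝ × ℝ => f p.1 p.2) (x, t)) (x, t) :=
    (hf.differentiable (by simp) (x, t)).hasFDerivAt
  have h2 : HasDerivAt (fun y : ℝ => (y, t)) ((1 : ℝ), (0 : ℝ)) x :=
    (hasDerivAt_id x).prodMk (hasDerivAt_const x t)
  exact h1.comp_hasDerivAt x h2

lemma Sm.hasDerivAt_t {f : ℝ → ℝ → E3} (hf : Sm f) (x t : ℝ) :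
    HasDerivAt (fun s => f x s) (fderiv ℝ (fun p : ℝ × ℝ => f p.1 p.2) (x, t) (0, 1)) t := by
  have h1 : HasFDerivAt (fun p : ℝ × ℝ => f p.1 p.2)
      (fderiv ℝ (fun p : ℝ × ℝ => f p.1 p.2) (x, t)) (x, t) :=
    (hf.differentiable (by simp) (x, t)).hasFDerivAt
  have h2 : HasDerivAt (fun s : ℝ => (x, s)) ((0 : ℝ), (1 : ℝ)) t :=
    (hasDerivAt_const t x).prodMk (hasDerivAt_id t)
  exact h1.comp_hasDerivAt t h2

lemma Sm.pdx_eq {f : ℝ → ℝ → E3} (hf : Sm f) (x t : ℝ) :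
    pdx f x t = fderiv ℝ (fun p : ℝ × ℝ => f p.1 p.2) (x, t) (1, 0) :=
  (hf.hasDerivAt_x x t).deriv

lemma Sm.pdt_eq {f : ℝ → ℝ → E3} (hf : Sm f) (x t : ℝ) :
    pdt f x t = fderiv ℝ (fun p : ℝ × ℝ => f p.1 p.2) (x, t) (0, 1) :=
  (hf.hasDerivAt_t x t).deriv

lemma Sm.dx {f : ℝ → ℝ → E3} (hf : Sm f) (x t : ℝ) :
    HasDerivAt (fun y => f y t) (pdx f x t) x := by
  rw [hf.pdx_eq]; exact hf.hasDerivAt_x x t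

lemma Sm.dt {f : ℝ → ℝ → E3} (hf : Sm f) (x t : ℝ) :
    HasDerivAt (fun s => f x s) (pdt f x t) t := by
  rw [hf.pdt_eq]; exact hf.hasDerivAt_t x t

lemma Sm.pdx {f : ℝ → ℝ → E3} (hf : Sm f) : Sm (pdx f) := by
  have : (fun p : ℝ × ℝ => _root_.pdx f p.1 p.2) =
      fun p : ℝ × ℝ => fderiv ℝ (fun p : ℝ × ℝ => f p.1 p.2) p (1, 0) := by
    funext p; exact hf.pdx_eq p.1 p.2
  unfold Sm
  rw [this]
  exact (hf.fderiv_right (m := (⊤ : ℕ∞)) (by simp)).clm_apply contDiff_const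

lemma Sm.pdt {f : ℝ → ℝ → E3} (hf : Sm f) : Sm (pdt f) := by
  have : (fun p : ℝ × ℝ => _root_.pdt f p.1 p.2) =
      fun p : ℝ × ℝ => fderiv ℝ (fun p : ℝ × ℝ => f p.1 p.2) p (0, 1) := by
    funext p; exact hf.pdt_eq p.1 p.2
  unfold Sm
  rw [this]
  exact (hf.fderiv_right (m := (⊤ : ℕ∞)) (by simp)).clm_apply contDiff_const

lemma Sm.comm {f : ℝ → ℝ → E3} (hf : Sm f) : _root_.pdx (_root_.pdt f) = _root_.pdt (_root_.pdx f) := by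
  funext x t
  rw [hf.pdt.pdx_eq, hf.pdx.pdt_eq]
  have e1 : (fun p : ℝ × ℝ => _root_.pdx f p.1 p.2) =
      fun p : ℝ × ℝ => fderiv ℝ (fun p : ℝ × ℝ => f p.1 p.2) p (1, 0) := by
    funext p; exact hf.pdx_eq p.1 p.2
  have e2 : (fun p : ℝ × ℝ => _root_.pdt f p.1 p.2) =
      fun p : ℝ × ℝ => fderiv ℝ (fun p : ℝ × ℝ => f p.1 p.2) p (0, 1) := by
    funext p; exact hf.pdt_eq p.1 p.2
  rw [e1, e2]
  have hd : DifferentiableAt ℝ (fderiv ℝ (fun p : ℝ × ℝ => f p.1 p.2)) (x, t) :=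
    (hf.fderiv_right (m := (⊤ : ℕ∞)) (by simp)).differentiable (by simp) _
  have hs : IsSymmSndFDerivAt ℝ (fun p : ℝ × ℝ => f p.1 p.2) (x, t) :=
    (ContDiff.contDiffAt hf).isSymmSndFDerivAt (by simp; exact WithTop.coe_le_coe.2 le_top)
  rw [fderiv_clm_apply hd (differentiableAt_const _), fderiv_clm_apply hd (differentiableAt_const _)]
  simpa using hs.eq (1, 0) (0, 1)

/-- iterated x-derivatives -/
def vv (u : ℝ → ℝ → E3) (k : ℕ) : ℝ → ℝ → E3 := pdx^[k] u

lemma vv_succ (u : ℝ → ℝ → E3) (k : ℕ) : vv u (k+1) = pdx (vv u k) := by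
  simp [vv, Function.iterate_succ_apply']

lemma vv_sm {u : ℝ → ℝ → E3} (hu : Sm u) (k : ℕ) : Sm (vv u k) := by
  induction k with
  | zero => exact hu
  | succ k ih => rw [vv_succ]; exact ih.pdx

lemma vv_pdt {u : ℝ → ℝ → E3} (hu : Sm u) (k : ℕ) : vv (pdt u) k = pdt (vv u k) := by
  induction k with
  | zero => rfl
  | succ k ih => rw [vv_succ, vv_succ, ih, (vv_sm hu k).comm]

lemma deriv_iter_eq (u : ℝ → ℝ → E3) (t : ℝ) (k : ℕ) :
    deriv^[k] (fun x => u x t) = fun x => vv u k x t := by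
  induction k with
  | zero => rfl
  | succ k ih => rw [Function.iterate_succ_apply', ih, vv_succ]; rfl

lemma Sm.cont_x {f : ℝ → ℝ → E3} (hf : Sm f) (t : ℝ) : Continuous (fun x => f x t) := by
  have h : Continuous (fun p : ℝ × ℝ => f p.1 p.2) := hf.continuous
  exact h.comp (by fun_prop : Continuous fun x : ℝ => (x, t))

lemma deriv_eq_of_eqOn {g h : ℝ → E3} {g' h' : E3} {a b x : ℝ} (hab : a < b) (hx : x ∈ Icc a b)
    (hgh : ∀ y ∈ Icc a b, g y = h y) (hg : HasDerivAt g g' x) (hh : HasDerivAt h h' x) :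
    g' = h' := by
  have hu := uniqueDiffOn_Icc hab x hx
  have h1 := hg.hasDerivWithinAt (s := Icc a b)
  have h2 := (hh.hasDerivWithinAt (s := Icc a b)).congr hgh (hgh x hx)
  exact hu.eq_deriv _ h1 h2

lemma deriv_eq_of_eqOn' {g h : ℝ → ℝ} {g' h' : ℝ} {a b x : ℝ} (hab : a < b) (hx : x ∈ Icc a b)
    (hgh : ∀ y ∈ Icc a b, g y = h y) (hg : HasDerivAt g g' x) (hh : HasDerivAt h h' x) :
    g' = h' := by
  have hu := uniqueDiffOn_Icc hab x hx
  have h1 := hg.hasDerivWithinAt (s := Icc a b)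
  have h2 := (hh.hasDerivWithinAt (s := Icc a b)).congr hgh (hgh x hx)
  exact hu.eq_deriv _ h1 h2

/-! cross product algebra -/

lemma c0 (a b : E3) : cross3 a b 0 = a 1 * b 2 - a 2 * b 1 := by
  simp [cross3, crossProduct]
lemma c1 (a b : E3) : cross3 a b 1 = a 2 * b 0 - a 0 * b 2 := by
  simp [cross3, crossProduct]
lemma c2 (a b : E3) : cross3 a b 2 = a 0 * b 1 - a 1 * b 0 := by
  simp [cross3, crossProduct]

/-- dot product -/
def dt3 (a b : E3) : ℝ := a 0 * b 0 + a 1 * b 1 + a 2 * b 2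

/-- triple product -/
def dd (a b c : E3) : ℝ := dt3 a (cross3 b c)

lemma dt3_eq_inner (a b : E3) : dt3 a b = inner ℝ a b := by
  simp [dt3, PiLp.inner_apply, Fin.sum_univ_three]; ring

lemma nsq (a : E3) : ‖a‖ ^ 2 = dt3 a a := by
  rw [dt3_eq_inner, real_inner_self_eq_norm_sq]

lemma e3_ext {a b : E3} (h0 : a 0 = b 0) (h1 : a 1 = b 1) (h2 : a 2 = b 2) : a = b := by
  ext i; fin_cases i <;> assumption

lemma cross_norm_sq (a b : E3) : ‖cross3 a b‖ ^ 2 = ‖a‖ ^ 2 * ‖b‖ ^ 2 - dt3 a b ^ 2 := by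
  simp only [nsq, dt3, c0, c1, c2]; ring

lemma cross_norm_le (a b : E3) : ‖cross3 a b‖ ≤ ‖a‖ * ‖b‖ := by
  apply le_of_sq_le_sq _ (by positivity)
  rw [cross_norm_sq, mul_pow]; nlinarith [sq_nonneg (dt3 a b)]

lemma dt3_abs_le (a b : E3) : |dt3 a b| ≤ ‖a‖ * ‖b‖ := by
  rw [dt3_eq_inner]; exact abs_real_inner_le_norm a b

lemma dd_abs_le (a b c : E3) : |dd a b c| ≤ ‖a‖ * (‖b‖ * ‖c‖) :=
  (dt3_abs_le _ _).trans (by gcongr; exact cross_norm_le _ _)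

lemma cross_self3 (a : E3) : cross3 a a = 0 := by
  apply e3_ext <;> simp [c0, c1, c2] <;> ring
lemma cross_anti (a b : E3) : cross3 a b = - cross3 b a := by
  apply e3_ext <;> simp [c0, c1, c2] <;> ring
lemma cross_zl (a : E3) : cross3 0 a = 0 := by
  apply e3_ext <;> simp [c0, c1, c2]
lemma cross_zr (a : E3) : cross3 a 0 = 0 := by
  apply e3_ext <;> simp [c0, c1, c2]
lemma dt3_zl (a : E3) : dt3 0 a = 0 := by simp [dt3]
lemma dt3_zr (a : E3) : dt3 a 0 = 0 := by simp [dt3]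

lemma hasDerivAt_coord {f : ℝ → E3} {f' : E3} {x : ℝ} (hf : HasDerivAt f f' x) (i : Fin 3) :
    HasDerivAt (fun y => f y i) (f' i) x := by
  exact (EuclideanSpace.proj (𝕜 := ℝ) i).hasFDerivAt.comp_hasDerivAt x hf

lemma hasDerivAt_of_coord {f : ℝ → E3} {f' : E3} {x : ℝ}
    (hf : ∀ i : Fin 3, HasDerivAt (fun y => f y i) (f' i) x) : HasDerivAt f f' x := by
  have h := hasDerivAt_pi.2 hf
  exact (EuclideanSpace.equiv (Fin 3) ℝ).symm.toContinuousLinearMap.hasFDerivAt.comp_hasDerivAt x h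

lemma hasDerivAt_cross {f g : ℝ → E3} {f' g' : E3} {x : ℝ} (hf : HasDerivAt f f' x)
    (hg : HasDerivAt g g' x) :
    HasDerivAt (fun y => cross3 (f y) (g y)) (cross3 f' (g x) + cross3 (f x) g') x := by
  apply hasDerivAt_of_coord
  have F := hasDerivAt_coord hf
  have G := hasDerivAt_coord hg
  intro i
  fin_cases i
  · have := ((F 1).mul (G 2)).sub ((F 2).mul (G 1))
    have e : (fun y => cross3 (f y) (g y) 0) = _ := funext fun y => c0 (f y) (g y)
    show HasDerivAt (fun y => cross3 (f y) (g y) 0) ((cross3 f' (g x) + cross3 (f x) g') 0) x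
    rw [e]
    refine HasDerivAt.congr_deriv this ?_
    simp only [PiLp.add_apply, c0]; ring
  · have := ((F 2).mul (G 0)).sub ((F 0).mul (G 2))
    have e : (fun y => cross3 (f y) (g y) 1) = _ := funext fun y => c1 (f y) (g y)
    show HasDerivAt (fun y => cross3 (f y) (g y) 1) ((cross3 f' (g x) + cross3 (f x) g') 1) x
    rw [e]
    refine HasDerivAt.congr_deriv this ?_
    simp only [PiLp.add_apply, c1]; ring
  · have := ((F 0).mul (G 1)).sub ((F 1).mul (G 0))
    have e : (fun y => cross3 (f y) (g y) 2) = _ := funext fun y => c2 (f y) (g y)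
    show HasDerivAt (fun y => cross3 (f y) (g y) 2) ((cross3 f' (g x) + cross3 (f x) g') 2) x
    rw [e]
    refine HasDerivAt.congr_deriv this ?_
    simp only [PiLp.add_apply, c2]; ring

lemma hasDerivAt_dt3 {f g : ℝ → E3} {f' g' : E3} {x : ℝ} (hf : HasDerivAt f f' x)
    (hg : HasDerivAt g g' x) :
    HasDerivAt (fun y => dt3 (f y) (g y)) (dt3 f' (g x) + dt3 (f x) g') x := by
  have F := hasDerivAt_coord hf
  have G := hasDerivAt_coord hg
  have := (((F 0).mul (G 0)).add ((F 1).mul (G 1))).add ((F 2).mul (G 2))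
  refine HasDerivAt.congr_deriv (f := fun y => dt3 (f y) (g y)) this ?_
  simp only [dt3]; ring

lemma hasDerivAt_dd {f g h : ℝ → E3} {f' g' h' : E3} {x : ℝ} (hf : HasDerivAt f f' x)
    (hg : HasDerivAt g g' x) (hh : HasDerivAt h h' x) :
    HasDerivAt (fun y => dd (f y) (g y) (h y))
      (dd f' (g x) (h x) + dd (f x) g' (h x) + dd (f x) (g x) h') x := by
  have := hasDerivAt_dt3 hf (hasDerivAt_cross hg hh)
  refine HasDerivAt.congr_deriv (f := fun y => dd (f y) (g y) (h y)) this ?_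
  simp only [dd, dt3, PiLp.add_apply]; ring

lemma continuous_cross {f g : ℝ → E3} (hf : Continuous f) (hg : Continuous g) :
    Continuous (fun y => cross3 (f y) (g y)) := by
  have F : ∀ i, Continuous fun y => f y i := fun i => (EuclideanSpace.proj (𝕜 := ℝ) i).continuous.comp hf
  have G : ∀ i, Continuous fun y => g y i := fun i => (EuclideanSpace.proj (𝕜 := ℝ) i).continuous.comp hg
  have : (fun y => cross3 (f y) (g y)) = fun y => WithLp.toLp 2 (fun i => cross3 (f y) (g y) i) := rfl
  rw [this]
  refine (PiLp.continuous_toLp 2 _).comp (continuous_pi fun i => ?_)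
  fin_cases i
  · simp only [Fin.zero_eta, c0]; exact ((F 1).mul (G 2)).sub ((F 2).mul (G 1))
  · simp only [Fin.mk_one, c1]; exact ((F 2).mul (G 0)).sub ((F 0).mul (G 2))
  · simp only [Fin.reduceFinMk, c2]; exact ((F 0).mul (G 1)).sub ((F 1).mul (G 0))

lemma continuous_dt3 {X : Type*} [TopologicalSpace X] {f g : X → E3} (hf : Continuous f) (hg : Continuous g) :
    Continuous (fun y => dt3 (f y) (g y)) := by
  simp only [dt3_eq_inner]; exact hf.inner hg

lemma continuous_dd {f g h : ℝ → E3} (hf : Continuous f) (hg : Continuous g) (hh : Continuous h) :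
    Continuous (fun y => dd (f y) (g y) (h y)) := continuous_dt3 hf (continuous_cross hg hh)

/-- derivative under the integral, for scalar function -/
lemma hasDerivAt_int {F F' : ℝ → ℝ → ℝ} (hF : ∀ t, Continuous (fun x => F x t))
    (hF' : Continuous (fun p : ℝ × ℝ => F' p.1 p.2))
    (hd : ∀ x t, HasDerivAt (fun s => F x s) (F' x t) t) (t : ℝ) :
    HasDerivAt (fun s => ∫ x in (0:ℝ)..1, F x s) (∫ x in (0:ℝ)..1, F' x t) t := by
  have hK : IsCompact (Icc (0:ℝ) 1 ×ˢ Icc (t-1) (t+1)) := isCompact_Icc.prod isCompact_Icc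
  obtain ⟨M, hM⟩ := hK.exists_bound_of_continuousOn hF'.continuousOn
  have := intervalIntegral.hasDerivAt_integral_of_dominated_loc_of_deriv_le
    (μ := volume) (a := 0) (b := 1) (F := fun s x => F x s) (F' := fun s x => F' x s) (x₀ := t)
    (s := Icc (t-1) (t+1)) (bound := fun _ => M) (Icc_mem_nhds (by linarith) (by linarith))
    (Filter.Eventually.of_forall fun s => (hF s).aestronglyMeasurable)
    ((hF t).intervalIntegrable _ _)
    (hF'.comp (by fun_prop : Continuous fun x : ℝ => (x, t))).aestronglyMeasurable
    (Filter.Eventually.of_forall fun x hx s hs => hM (x, s) ⟨?_, hs⟩)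
    (by simp) (Filter.Eventually.of_forall fun x hx s hs => hd x s)
  · exact this.2
  · rw [uIoc_of_le zero_le_one] at hx
    exact ⟨hx.1.le, hx.2⟩

/-- space profile at a fixed time -/
structure Prof (w : ℕ → ℝ → E3) : Prop where
  hd : ∀ k x, HasDerivAt (w k) (w (k+1) x) x
  one : ∀ x ∈ Icc (0:ℝ) 1, dt3 (w 0 x) (w 0 x) = 1

lemma dt3_comm (a b : E3) : dt3 a b = dt3 b a := by simp only [dt3]; ring

namespace Prof
variable {w : ℕ → ℝ → E3}

lemma cont (P : Prof w) (k : ℕ) : Continuous (w k) :=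
  continuous_iff_continuousAt.2 fun x => (P.hd k x).continuousAt

lemma con1 (P : Prof w) : ∀ x ∈ Icc (0:ℝ) 1, dt3 (w 0 x) (w 1 x) = 0 := by
  intro x hx
  have h := deriv_eq_of_eqOn' zero_lt_one hx P.one (hasDerivAt_dt3 (P.hd 0 x) (P.hd 0 x))
    (hasDerivAt_const x (1:ℝ))
  simp only [zero_add] at h
  rw [dt3_comm (w 1 x)] at h; linarith

lemma con2 (P : Prof w) : ∀ x ∈ Icc (0:ℝ) 1, dt3 (w 0 x) (w 2 x) = - dt3 (w 1 x) (w 1 x) := by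
  intro x hx
  have h := deriv_eq_of_eqOn' zero_lt_one hx P.con1 (hasDerivAt_dt3 (P.hd 0 x) (P.hd 1 x))
    (hasDerivAt_const x (0:ℝ))
  simp only [zero_add, Nat.reduceAdd] at h
  linarith

lemma con3 (P : Prof w) : ∀ x ∈ Icc (0:ℝ) 1, dt3 (w 0 x) (w 3 x) = - 3 * dt3 (w 1 x) (w 2 x) := by
  intro x hx
  have h := deriv_eq_of_eqOn' zero_lt_one hx P.con2 (hasDerivAt_dt3 (P.hd 0 x) (P.hd 2 x))
    (hasDerivAt_dt3 (P.hd 1 x) (P.hd 1 x)).fun_neg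
  simp only [zero_add, Nat.reduceAdd] at h
  rw [dt3_comm (w 2 x) (w 1 x)] at h; linarith

lemma con4 (P : Prof w) : ∀ x ∈ Icc (0:ℝ) 1,
    dt3 (w 0 x) (w 4 x) = - 4 * dt3 (w 1 x) (w 3 x) - 3 * dt3 (w 2 x) (w 2 x) := by
  intro x hx
  have h := deriv_eq_of_eqOn' zero_lt_one hx P.con3 (hasDerivAt_dt3 (P.hd 0 x) (P.hd 3 x))
    ((hasDerivAt_dt3 (P.hd 1 x) (P.hd 2 x)).const_mul (-3))
  simp only [zero_add, Nat.reduceAdd] at h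
  linarith

lemma con5 (P : Prof w) : ∀ x ∈ Icc (0:ℝ) 1,
    dt3 (w 0 x) (w 5 x) = - 5 * dt3 (w 1 x) (w 4 x) - 10 * dt3 (w 2 x) (w 3 x) := by
  intro x hx
  have h := deriv_eq_of_eqOn' zero_lt_one hx P.con4 (hasDerivAt_dt3 (P.hd 0 x) (P.hd 4 x))
    (((hasDerivAt_dt3 (P.hd 1 x) (P.hd 3 x)).const_mul (-4)).fun_sub
      ((hasDerivAt_dt3 (P.hd 2 x) (P.hd 2 x)).const_mul 3))
  simp only [zero_add, Nat.reduceAdd] at h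
  rw [dt3_comm (w 3 x) (w 2 x)] at h; linarith

lemma con6 (P : Prof w) : ∀ x ∈ Icc (0:ℝ) 1,
    dt3 (w 0 x) (w 6 x) = - 6 * dt3 (w 1 x) (w 5 x) - 15 * dt3 (w 2 x) (w 4 x)
      - 10 * dt3 (w 3 x) (w 3 x) := by
  intro x hx
  have h := deriv_eq_of_eqOn' zero_lt_one hx P.con5 (hasDerivAt_dt3 (P.hd 0 x) (P.hd 5 x))
    (((hasDerivAt_dt3 (P.hd 1 x) (P.hd 4 x)).const_mul (-5)).fun_sub
      ((hasDerivAt_dt3 (P.hd 2 x) (P.hd 3 x)).const_mul 10))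
  simp only [zero_add, Nat.reduceAdd] at h
  linarith

lemma norm0 (P : Prof w) : ∀ x ∈ Icc (0:ℝ) 1, ‖w 0 x‖ = 1 := by
  intro x hx
  have h := nsq (w 0 x)
  rw [P.one x hx] at h
  exact (pow_eq_one_iff_of_nonneg (norm_nonneg _) two_ne_zero).1 h

end Prof

/-- the remainder density -/
def QQ (w : ℕ → ℝ → E3) (k : ℕ) (x : ℝ) : ℝ :=
  -((k:ℝ)-1) * ((2 * dt3 (w 0 x) (w (k+1) x) + dt3 (w 1 x) (w k x)) * dd (w 0 x) (w 1 x) (w k x)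
    + dt3 (w 0 x) (w k x) * dd (w 0 x) (w 2 x) (w k x))

lemma cramer (p q r s : E3) (hp : dt3 p p = 1) (hq : dt3 p q = 0) :
    dd r q s = - dt3 p s * dd p q r + dt3 p r * dd p q s := by
  have : dt3 p p * dd r q s = - dt3 p s * dd p q r + dt3 p r * dd p q s + dt3 p q * dd r p s := by
    simp only [dd, dt3, c0, c1, c2]; ring
  rw [hp, hq] at this; linarith

lemma dd_self13 (a b : E3) : dd a b a = 0 := by simp only [dd, dt3, c0, c1, c2]; ring
lemma dd_self12 (a b : E3) : dd a a b = 0 := by simp only [dd, dt3, c0, c1, c2]; ring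
lemma dd_self23 (a b : E3) : dd a b b = 0 := by simp only [dd, dt3, c0, c1, c2]; ring
lemma dd_z1 (a b : E3) : dd 0 a b = 0 := dt3_zl _
lemma dd_z2 (a b : E3) : dd a 0 b = 0 := by rw [dd, cross_zl, dt3_zr]
lemma dd_z3 (a b : E3) : dd a b 0 = 0 := by rw [dd, cross_zr, dt3_zr]

lemma Prof.contQ {w : ℕ → ℝ → E3} (P : Prof w) (k : ℕ) : Continuous (QQ w k) := by
  have d := fun i j => continuous_dt3 (P.cont i) (P.cont j)
  have e := fun i j l => continuous_dd (P.cont i) (P.cont j) (P.cont l)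
  exact continuous_const.mul (((continuous_const.mul (d 0 (k+1))).add (d 1 k)).mul (e 0 1 k)
    |>.add ((d 0 k).mul (e 0 2 k)))

lemma Prof.ibp {w : ℕ → ℝ → E3} (P : Prof w) (k : ℕ)
    (hb1 : w 1 0 = 0 ∧ w 1 1 = 0)
    (hb : (w k 0 = 0 ∨ w (k+1) 0 = 0) ∧ (w k 1 = 0 ∨ w (k+1) 1 = 0)) :
    ∫ x in (0:ℝ)..1, (dd (w k x) (w 0 x) (w (k+2) x) + k * dd (w k x) (w 1 x) (w (k+1) x))
      = ∫ x in (0:ℝ)..1, QQ w k x := by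
  have d := fun i j => continuous_dt3 (P.cont i) (P.cont j)
  have e := fun i j l => continuous_dd (P.cont i) (P.cont j) (P.cont l)
  have hG : ∀ x, HasDerivAt (fun x => dd (w k x) (w 0 x) (w (k+1) x) +
      ((k:ℝ)-1) * (dt3 (w 0 x) (w k x) * dd (w 0 x) (w 1 x) (w k x))) _ x := fun x =>
    (hasDerivAt_dd (P.hd k x) (P.hd 0 x) (P.hd (k+1) x)).fun_add
      (((hasDerivAt_dt3 (P.hd 0 x) (P.hd k x)).fun_mul
        (hasDerivAt_dd (P.hd 0 x) (P.hd 1 x) (P.hd k x))).const_mul ((k:ℝ)-1))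
  have hF := intervalIntegral.integral_eq_sub_of_hasDerivAt (a := 0) (b := 1) (fun x _ => hG x)
    (by
      apply Continuous.intervalIntegrable
      exact ((((e _ _ _).add (e _ _ _)).add (e _ _ _)).add (continuous_const.mul
        ((((d _ _).add (d _ _)).mul (e _ _ _)).add ((d _ _).mul
          (((e _ _ _).add (e _ _ _)).add (e _ _ _)))))))
  have z0 : dd (w k 0) (w 0 0) (w (k+1) 0) = 0 := by
    rcases hb.1 with h | h <;> simp [h, dd_z1, dd_z3]
  have z1 : dd (w k 1) (w 0 1) (w (k+1) 1) = 0 := by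
    rcases hb.2 with h | h <;> simp [h, dd_z1, dd_z3]
  rw [z0, z1, hb1.1, hb1.2] at hF
  simp only [dd_z2, mul_zero, add_zero, sub_zero] at hF
  rw [← sub_eq_zero, ← intervalIntegral.integral_sub]
  · refine Eq.trans ?_ hF
    apply intervalIntegral.integral_congr
    intro x hx
    rw [uIcc_of_le zero_le_one] at hx
    have hc := cramer (w 0 x) (w 1 x) (w k x) (w (k+1) x) (P.one x hx) (P.con1 x hx)
    simp only [QQ, dd_self13, dd_self12, zero_add, Nat.reduceAdd]
    linear_combination ((k:ℝ)-1) * hc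
  · apply Continuous.intervalIntegrable
    exact (e _ _ _).add (continuous_const.mul (e _ _ _))
  · exact (P.contQ k).intervalIntegrable _ _

/-- all facts about a solution at a fixed time -/
structure Facts (T : ℝ) (u : ℝ → ℝ → E3) : Prop where
  sm : Sm u
  prof : ∀ t ∈ Icc (0:ℝ) T, Prof (fun k x => vv u k x t)
  r0 : ∀ x ∈ Icc (0:ℝ) 1, ∀ t ∈ Icc (0:ℝ) T, pdt (vv u 0) x t = cross3 (vv u 0 x t) (vv u 2 x t)
  r1 : ∀ x ∈ Icc (0:ℝ) 1, ∀ t ∈ Icc (0:ℝ) T, pdt (vv u 1) x t =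
    cross3 (vv u 1 x t) (vv u 2 x t) + cross3 (vv u 0 x t) (vv u 3 x t)
  r2 : ∀ x ∈ Icc (0:ℝ) 1, ∀ t ∈ Icc (0:ℝ) T, pdt (vv u 2) x t =
    (2:ℝ) • cross3 (vv u 1 x t) (vv u 3 x t) + cross3 (vv u 0 x t) (vv u 4 x t)
  r3 : ∀ x ∈ Icc (0:ℝ) 1, ∀ t ∈ Icc (0:ℝ) T, pdt (vv u 3) x t =
    (2:ℝ) • cross3 (vv u 2 x t) (vv u 3 x t) + (3:ℝ) • cross3 (vv u 1 x t) (vv u 4 x t)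
      + cross3 (vv u 0 x t) (vv u 5 x t)
  r4 : ∀ x ∈ Icc (0:ℝ) 1, ∀ t ∈ Icc (0:ℝ) T, pdt (vv u 4) x t =
    (5:ℝ) • cross3 (vv u 2 x t) (vv u 4 x t) + (4:ℝ) • cross3 (vv u 1 x t) (vv u 5 x t)
      + cross3 (vv u 0 x t) (vv u 6 x t)
  r5 : ∀ x ∈ Icc (0:ℝ) 1, ∀ t ∈ Icc (0:ℝ) T, pdt (vv u 5) x t =
    (5:ℝ) • cross3 (vv u 3 x t) (vv u 4 x t) + (9:ℝ) • cross3 (vv u 2 x t) (vv u 5 x t)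
      + (5:ℝ) • cross3 (vv u 1 x t) (vv u 6 x t) + cross3 (vv u 0 x t) (vv u 7 x t)
  b1 : ∀ t ∈ Icc (0:ℝ) T, vv u 1 0 t = 0 ∧ vv u 1 1 t = 0
  b3 : ∀ t ∈ Icc (0:ℝ) T, vv u 3 0 t = 0 ∧ vv u 3 1 t = 0
  b5 : ∀ t ∈ Icc (0:ℝ) T, vv u 5 0 t = 0 ∧ vv u 5 1 t = 0

lemma zero_of_cross {p q : E3} (hp : dt3 p p = 1) (h1 : cross3 p q = 0) (h2 : dt3 p q = 0) : q = 0 := by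
  have := cross_norm_sq p q
  rw [h1, h2, nsq p, hp] at this
  simpa using this.symm

lemma vv_dx {u : ℝ → ℝ → E3} (hu : Sm u) (k : ℕ) (x t : ℝ) :
    HasDerivAt (fun y => vv u k y t) (vv u (k+1) x t) x := by
  rw [vv_succ]; exact (vv_sm hu k).dx x t

lemma vv_dxt {u : ℝ → ℝ → E3} (hu : Sm u) (k : ℕ) (x t : ℝ) :
    HasDerivAt (fun y => pdt (vv u k) y t) (pdt (vv u (k+1)) x t) x := by
  rw [vv_succ, ← (vv_sm hu k).comm]; exact (vv_sm hu k).pdt.dx x t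

lemma facts {T : ℝ} (hT : 0 < T) {u : ℝ → ℝ → E3} (h : IsSol T u) : Facts T u := by
  obtain ⟨hu, h1, he, hb⟩ := h
  have hu : Sm u := hu
  have prof : ∀ t ∈ Icc (0:ℝ) T, Prof (fun k x => vv u k x t) := by
    intro t ht
    refine ⟨fun k x => vv_dx hu k x t, fun x hx => ?_⟩
    rw [← nsq]; simp [vv, h1 x hx t ht]
  have d := fun k x t => vv_dx hu k x t
  have r0 : ∀ x ∈ Icc (0:ℝ) 1, ∀ t ∈ Icc (0:ℝ) T, pdt (vv u 0) x t = cross3 (vv u 0 x t) (vv u 2 x t) :=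
    fun x hx t ht => he x hx t ht
  have r1 : ∀ x ∈ Icc (0:ℝ) 1, ∀ t ∈ Icc (0:ℝ) T, pdt (vv u 1) x t =
    cross3 (vv u 1 x t) (vv u 2 x t) + cross3 (vv u 0 x t) (vv u 3 x t) := fun x hx t ht =>
    deriv_eq_of_eqOn zero_lt_one hx (fun y hy => r0 y hy t ht) (vv_dxt hu 0 x t)
      (hasDerivAt_cross (d 0 x t) (d 2 x t))
  have r2 : ∀ x ∈ Icc (0:ℝ) 1, ∀ t ∈ Icc (0:ℝ) T, pdt (vv u 2) x t =
    (2:ℝ) • cross3 (vv u 1 x t) (vv u 3 x t) + cross3 (vv u 0 x t) (vv u 4 x t) := by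
    intro x hx t ht
    rw [deriv_eq_of_eqOn zero_lt_one hx (fun y hy => r1 y hy t ht) (vv_dxt hu 1 x t)
      ((hasDerivAt_cross (d 1 x t) (d 2 x t)).fun_add (hasDerivAt_cross (d 0 x t) (d 3 x t)))]
    simp only [Nat.reduceAdd, cross_self3]; module
  have r3 : ∀ x ∈ Icc (0:ℝ) 1, ∀ t ∈ Icc (0:ℝ) T, pdt (vv u 3) x t =
    (2:ℝ) • cross3 (vv u 2 x t) (vv u 3 x t) + (3:ℝ) • cross3 (vv u 1 x t) (vv u 4 x t)
      + cross3 (vv u 0 x t) (vv u 5 x t) := by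
    intro x hx t ht
    rw [deriv_eq_of_eqOn zero_lt_one hx (fun y hy => r2 y hy t ht) (vv_dxt hu 2 x t)
      (((hasDerivAt_cross (d 1 x t) (d 3 x t)).fun_const_smul (2:ℝ)).fun_add
        (hasDerivAt_cross (d 0 x t) (d 4 x t)))]
    simp only [Nat.reduceAdd]; module
  have r4 : ∀ x ∈ Icc (0:ℝ) 1, ∀ t ∈ Icc (0:ℝ) T, pdt (vv u 4) x t =
    (5:ℝ) • cross3 (vv u 2 x t) (vv u 4 x t) + (4:ℝ) • cross3 (vv u 1 x t) (vv u 5 x t)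
      + cross3 (vv u 0 x t) (vv u 6 x t) := by
    intro x hx t ht
    rw [deriv_eq_of_eqOn zero_lt_one hx (fun y hy => r3 y hy t ht) (vv_dxt hu 3 x t)
      ((((hasDerivAt_cross (d 2 x t) (d 3 x t)).fun_const_smul (2:ℝ)).fun_add
        ((hasDerivAt_cross (d 1 x t) (d 4 x t)).fun_const_smul (3:ℝ))).fun_add
        (hasDerivAt_cross (d 0 x t) (d 5 x t)))]
    simp only [Nat.reduceAdd, cross_self3]; module
  have r5 : ∀ x ∈ Icc (0:ℝ) 1, ∀ t ∈ Icc (0:ℝ) T, pdt (vv u 5) x t =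
    (5:ℝ) • cross3 (vv u 3 x t) (vv u 4 x t) + (9:ℝ) • cross3 (vv u 2 x t) (vv u 5 x t)
      + (5:ℝ) • cross3 (vv u 1 x t) (vv u 6 x t) + cross3 (vv u 0 x t) (vv u 7 x t) := by
    intro x hx t ht
    rw [deriv_eq_of_eqOn zero_lt_one hx (fun y hy => r4 y hy t ht) (vv_dxt hu 4 x t)
      ((((hasDerivAt_cross (d 2 x t) (d 4 x t)).fun_const_smul (5:ℝ)).fun_add
        ((hasDerivAt_cross (d 1 x t) (d 5 x t)).fun_const_smul (4:ℝ))).fun_add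
        (hasDerivAt_cross (d 0 x t) (d 6 x t)))]
    simp only [Nat.reduceAdd]; module
  have tz : ∀ k x, (∀ t ∈ Icc (0:ℝ) T, vv u k x t = 0) → ∀ t ∈ Icc (0:ℝ) T, pdt (vv u k) x t = 0 :=
    fun k x h t ht => deriv_eq_of_eqOn hT ht h ((vv_sm hu k).dt x t) (hasDerivAt_const t 0)
  have b3 : ∀ x ∈ Icc (0:ℝ) 1, (∀ t ∈ Icc (0:ℝ) T, vv u 1 x t = 0) →
      ∀ t ∈ Icc (0:ℝ) T, vv u 3 x t = 0 := by
    intro x hx hv t ht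
    have h := r1 x hx t ht
    rw [tz 1 x hv t ht, hv t ht, cross_zl, zero_add] at h
    have h' := (prof t ht).con3 x hx
    simp only [hv t ht, dt3_zl, mul_zero] at h'
    exact zero_of_cross ((prof t ht).one x hx) h.symm h'
  have b5 : ∀ x ∈ Icc (0:ℝ) 1, (∀ t ∈ Icc (0:ℝ) T, vv u 1 x t = 0) →
      ∀ t ∈ Icc (0:ℝ) T, vv u 5 x t = 0 := by
    intro x hx hv t ht
    have h := r3 x hx t ht
    rw [tz 3 x (b3 x hx hv) t ht, hv t ht, b3 x hx hv t ht, cross_zl, cross_zr] at h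
    simp only [smul_zero, zero_add] at h
    have h' := (prof t ht).con5 x hx
    simp only [hv t ht, b3 x hx hv t ht, dt3_zl, dt3_zr, mul_zero, sub_zero] at h'
    exact zero_of_cross ((prof t ht).one x hx) h.symm h'
  have m0 : (0:ℝ) ∈ Icc (0:ℝ) 1 := by simp
  have m1 : (1:ℝ) ∈ Icc (0:ℝ) 1 := by simp
  have v0 : ∀ t ∈ Icc (0:ℝ) T, vv u 1 0 t = 0 := fun t ht => (hb t ht).1
  have v1 : ∀ t ∈ Icc (0:ℝ) T, vv u 1 1 t = 0 := fun t ht => (hb t ht).2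
  exact ⟨hu, prof, r0, r1, r2, r3, r4, r5, hb, fun t ht => ⟨b3 0 m0 v0 t ht, b3 1 m1 v1 t ht⟩,
    fun t ht => ⟨b5 0 m0 v0 t ht, b5 1 m1 v1 t ht⟩⟩

/-- squared L2 norm of the k-th derivative -/
def yy (u : ℝ → ℝ → E3) (k : ℕ) (t : ℝ) : ℝ := ∫ x in (0:ℝ)..1, dt3 (vv u k x t) (vv u k x t)

lemma dt3_nonneg (a : E3) : 0 ≤ dt3 a a := by rw [← nsq]; positivity

lemma yy_nonneg (u : ℝ → ℝ → E3) (k : ℕ) (t : ℝ) : 0 ≤ yy u k t :=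
  intervalIntegral.integral_nonneg zero_le_one fun _ _ => dt3_nonneg _

lemma Sm.cont {f : ℝ → ℝ → E3} (hf : Sm f) : Continuous (fun p : ℝ × ℝ => f p.1 p.2) :=
  ContDiff.continuous hf

lemma yy_hasDeriv {u : ℝ → ℝ → E3} (hu : Sm u) (k : ℕ) (t : ℝ) :
    HasDerivAt (yy u k) (∫ x in (0:ℝ)..1, 2 * dt3 (vv u k x t) (pdt (vv u k) x t)) t := by
  have hv := vv_sm hu k
  refine hasDerivAt_int (F := fun x t => dt3 (vv u k x t) (vv u k x t))
    (F' := fun x t => 2 * dt3 (vv u k x t) (pdt (vv u k) x t))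
    (fun t => continuous_dt3 (hv.cont_x t) (hv.cont_x t))
    (continuous_const.mul (continuous_dt3 hv.cont hv.pdt.cont)) (fun x t => ?_) t
  refine (hasDerivAt_dt3 (hv.dt x t) (hv.dt x t)).congr_deriv ?_
  rw [dt3_comm]; ring

lemma yy_hasDeriv' {T : ℝ} {u : ℝ → ℝ → E3} (F : Facts T u) (k : ℕ) {t : ℝ} (ht : t ∈ Icc (0:ℝ) T)
    (hb : (vv u k 0 t = 0 ∨ vv u (k+1) 0 t = 0) ∧ (vv u k 1 t = 0 ∨ vv u (k+1) 1 t = 0))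
    (Z : ℝ → ℝ) (hZ : Continuous Z)
    (hR : ∀ x ∈ Icc (0:ℝ) 1, dt3 (vv u k x t) (pdt (vv u k) x t) =
      dd (vv u k x t) (vv u 0 x t) (vv u (k+2) x t) +
        k * dd (vv u k x t) (vv u 1 x t) (vv u (k+1) x t) + Z x) :
    HasDerivAt (yy u k) (∫ x in (0:ℝ)..1, 2 * (QQ (fun k x => vv u k x t) k x + Z x)) t := by
  have P := F.prof t ht
  refine (yy_hasDeriv F.sm k t).congr_deriv ?_
  have h := P.ibp k (F.b1 t ht) hb
  have e := fun i j l => continuous_dd (P.cont i) (P.cont j) (P.cont l)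
  rw [intervalIntegral.integral_const_mul, intervalIntegral.integral_const_mul,
    intervalIntegral.integral_add ((P.contQ k).intervalIntegrable _ _) (hZ.intervalIntegrable _ _),
    ← h, ← intervalIntegral.integral_add _ (hZ.intervalIntegrable _ _)]
  · congr 1
    apply intervalIntegral.integral_congr
    intro x hx
    rw [uIcc_of_le zero_le_one] at hx
    exact hR x hx
  · apply Continuous.intervalIntegrable
    exact (e _ _ _).add (continuous_const.mul (e _ _ _))

lemma dt3_add (a b c : E3) : dt3 a (b + c) = dt3 a b + dt3 a c := by
  simp only [dt3, PiLp.add_apply]; ring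
lemma dt3_smul (r : ℝ) (a b : E3) : dt3 a (r • b) = r * dt3 a b := by
  simp only [dt3, PiLp.smul_apply, smul_eq_mul]; ring
lemma dt3_cross (a b c : E3) : dt3 a (cross3 b c) = dd a b c := rfl

lemma yy1_deriv {T : ℝ} {u : ℝ → ℝ → E3} (F : Facts T u) {t : ℝ} (ht : t ∈ Icc (0:ℝ) T) :
    HasDerivAt (yy u 1) 0 t := by
  refine (yy_hasDeriv' F 1 ht ⟨.inl (F.b1 t ht).1, .inl (F.b1 t ht).2⟩ (fun _ => 0)
    continuous_const ?_).congr_deriv ?_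
  · intro x hx
    rw [F.r1 x hx t ht]
    simp only [dt3_add, dt3_cross, dd_self12]; push_cast; ring
  · simp [QQ]

lemma yy2_deriv {T : ℝ} {u : ℝ → ℝ → E3} (F : Facts T u) {t : ℝ} (ht : t ∈ Icc (0:ℝ) T) :
    HasDerivAt (yy u 2) (10 * ∫ x in (0:ℝ)..1, dt3 (vv u 1 x t) (vv u 2 x t) *
      dd (vv u 0 x t) (vv u 1 x t) (vv u 2 x t)) t := by
  refine (yy_hasDeriv' F 2 ht ⟨.inr (F.b3 t ht).1, .inr (F.b3 t ht).2⟩ (fun _ => 0)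
    continuous_const ?_).congr_deriv ?_
  · intro x hx
    rw [F.r2 x hx t ht]
    simp only [dt3_add, dt3_smul, dt3_cross]; push_cast; ring
  · rw [← intervalIntegral.integral_const_mul]
    apply intervalIntegral.integral_congr
    intro x hx
    rw [uIcc_of_le zero_le_one] at hx
    have h3 := (F.prof t ht).con3 x hx
    simp only [QQ, Nat.reduceAdd, h3, dd_self23]
    push_cast; ring

lemma yy3_deriv {T : ℝ} {u : ℝ → ℝ → E3} (F : Facts T u) {t : ℝ} (ht : t ∈ Icc (0:ℝ) T) :
    HasDerivAt (yy u 3) (∫ x in (0:ℝ)..1, 2 * (QQ (fun k x => vv u k x t) 3 x + 0)) t := by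
  refine yy_hasDeriv' F 3 ht ⟨.inl (F.b3 t ht).1, .inl (F.b3 t ht).2⟩ (fun _ => 0)
    continuous_const ?_
  intro x hx
  rw [F.r3 x hx t ht]
  simp only [dt3_add, dt3_smul, dt3_cross, dd_self13]; push_cast; ring

lemma yy4_deriv {T : ℝ} {u : ℝ → ℝ → E3} (F : Facts T u) {t : ℝ} (ht : t ∈ Icc (0:ℝ) T) :
    HasDerivAt (yy u 4) (∫ x in (0:ℝ)..1, 2 * (QQ (fun k x => vv u k x t) 4 x + 0)) t := by
  refine yy_hasDeriv' F 4 ht ⟨.inr (F.b5 t ht).1, .inr (F.b5 t ht).2⟩ (fun _ => 0)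
    continuous_const ?_
  intro x hx
  rw [F.r4 x hx t ht]
  simp only [dt3_add, dt3_smul, dt3_cross, dd_self13]; push_cast; ring

lemma yy5_deriv {T : ℝ} {u : ℝ → ℝ → E3} (F : Facts T u) {t : ℝ} (ht : t ∈ Icc (0:ℝ) T) :
    HasDerivAt (yy u 5) (∫ x in (0:ℝ)..1, 2 * (QQ (fun k x => vv u k x t) 5 x +
      5 * dd (vv u 5 x t) (vv u 3 x t) (vv u 4 x t))) t := by
  have P := F.prof t ht
  refine yy_hasDeriv' F 5 ht ⟨.inl (F.b5 t ht).1, .inl (F.b5 t ht).2⟩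
    (fun x => 5 * dd (vv u 5 x t) (vv u 3 x t) (vv u 4 x t))
    (continuous_const.mul (continuous_dd (P.cont 5) (P.cont 3) (P.cont 4))) ?_
  intro x hx
  rw [F.r5 x hx t ht]
  simp only [dt3_add, dt3_smul, dt3_cross, dd_self13]; push_cast; ring

/-- quartic energy -/
def pp (u : ℝ → ℝ → E3) (t : ℝ) : ℝ := ∫ x in (0:ℝ)..1, dt3 (vv u 1 x t) (vv u 1 x t) ^ 2

lemma pp_deriv {T : ℝ} {u : ℝ → ℝ → E3} (F : Facts T u) {t : ℝ} (ht : t ∈ Icc (0:ℝ) T) :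
    HasDerivAt (pp u) (8 * ∫ x in (0:ℝ)..1, dt3 (vv u 1 x t) (vv u 2 x t) *
      dd (vv u 0 x t) (vv u 1 x t) (vv u 2 x t)) t := by
  have hv := vv_sm F.sm 1
  have P := F.prof t ht
  have h1 : HasDerivAt (pp u) (∫ x in (0:ℝ)..1, 4 * (dt3 (vv u 1 x t) (vv u 1 x t)
      * dt3 (vv u 1 x t) (pdt (vv u 1) x t))) t := by
    refine hasDerivAt_int (F := fun x t => dt3 (vv u 1 x t) (vv u 1 x t) ^ 2)
      (F' := fun x t => 4 * (dt3 (vv u 1 x t) (vv u 1 x t)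
      * dt3 (vv u 1 x t) (pdt (vv u 1) x t)))
      (fun t => (continuous_dt3 (hv.cont_x t) (hv.cont_x t)).pow 2)
      (continuous_const.mul ((continuous_dt3 hv.cont hv.cont).mul
        (continuous_dt3 hv.cont hv.pdt.cont))) (fun x t => ?_) t
    refine ((hasDerivAt_dt3 (hv.dt x t) (hv.dt x t)).fun_pow 2).congr_deriv ?_
    rw [dt3_comm (pdt (vv u 1) x t)]; push_cast; ring
  refine h1.congr_deriv ?_
  have d := fun i j => continuous_dt3 (P.cont i) (P.cont j)
  have e := fun i j l => continuous_dd (P.cont i) (P.cont j) (P.cont l)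
  have hG : ∀ x, HasDerivAt (fun x => dt3 (vv u 1 x t) (vv u 1 x t) *
      dd (vv u 1 x t) (vv u 0 x t) (vv u 2 x t)) _ x := fun x =>
    (hasDerivAt_dt3 (P.hd 1 x) (P.hd 1 x)).fun_mul
      (hasDerivAt_dd (P.hd 1 x) (P.hd 0 x) (P.hd 2 x))
  have hF := intervalIntegral.integral_eq_sub_of_hasDerivAt (a := 0) (b := 1) (fun x _ => hG x)
    (by
      apply Continuous.intervalIntegrable
      exact (((d _ _).add (d _ _)).mul (e _ _ _)).add ((d _ _).mul
          (((e _ _ _).add (e _ _ _)).add (e _ _ _))))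
  rw [(F.b1 t ht).1, (F.b1 t ht).2] at hF
  simp only [dt3_zl, zero_mul, sub_zero] at hF
  have hF4 : (4:ℝ) * _ = 4 * 0 := congrArg (fun z => 4 * z) hF
  rw [mul_zero, ← intervalIntegral.integral_const_mul] at hF4
  rw [← intervalIntegral.integral_const_mul, ← sub_eq_zero, ← intervalIntegral.integral_sub]
  · refine Eq.trans ?_ hF4
    apply intervalIntegral.integral_congr
    intro x hx
    rw [uIcc_of_le zero_le_one] at hx
    have hs : dd (vv u 1 x t) (vv u 0 x t) (vv u 2 x t) = - dd (vv u 0 x t) (vv u 1 x t) (vv u 2 x t) := by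
      simp only [dd, dt3, c0, c1, c2]; ring
    simp only [F.r1 x hx t ht, dt3_add, dt3_cross, dd_self12, dd_self13, Nat.reduceAdd, hs,
      dt3_comm (vv u 2 x t) (vv u 1 x t)]
    ring
  · apply Continuous.intervalIntegrable
    exact continuous_const.mul ((continuous_dt3 (hv.cont_x t) (hv.cont_x t)).mul
      (continuous_dt3 (hv.cont_x t) (hv.pdt.cont_x t)))
  · apply Continuous.intervalIntegrable
    exact continuous_const.mul ((d _ _).mul (e _ _ _))

lemma const_of_deriv {f : ℝ → ℝ} {T : ℝ} (hf : ∀ t ∈ Icc (0:ℝ) T, HasDerivAt f 0 t) :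
    ∀ t ∈ Icc (0:ℝ) T, f t = f 0 :=
  constant_of_has_deriv_right_zero (fun t ht => (hf t ht).continuousAt.continuousWithinAt)
    (fun t ht => (hf t ⟨ht.1, ht.2.le⟩).hasDerivWithinAt)

lemma sup_gen {f f' : ℝ → E3} (hf : ∀ x, HasDerivAt f (f' x) x) (hc : Continuous f') {ε : ℝ}
    (hε : 0 < ε) {x y : ℝ} (hx : x ∈ Icc (0:ℝ) 1) (hy : y ∈ Icc (0:ℝ) 1) :
    dt3 (f x) (f x) ≤ dt3 (f y) (f y) + (ε * (∫ z in (0:ℝ)..1, dt3 (f' z) (f' z)) +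
      ε⁻¹ * ∫ z in (0:ℝ)..1, dt3 (f z) (f z)) := by
  have hcf : Continuous f := continuous_iff_continuousAt.2 fun x => (hf x).continuousAt
  have d1 := continuous_dt3 hc hc
  have d2 := continuous_dt3 hcf hcf
  have d3 := continuous_dt3 hc hcf
  have d4 := continuous_dt3 hcf hc
  have hF := intervalIntegral.integral_eq_sub_of_hasDerivAt (a := y) (b := x)
    (fun x _ => hasDerivAt_dt3 (hf x) (hf x)) ((d3.add d4).intervalIntegrable _ _)
  set h : ℝ → ℝ := fun z => ε * dt3 (f' z) (f' z) + ε⁻¹ * dt3 (f z) (f z) with hh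
  have hhc : Continuous h := (continuous_const.mul d1).add (continuous_const.mul d2)
  have hh0 : ∀ z, 0 ≤ h z := fun z => by
    have := dt3_nonneg (f z); have := dt3_nonneg (f' z); simp only [hh]; positivity
  have hb : ∀ z, ‖dt3 (f' z) (f z) + dt3 (f z) (f' z)‖ ≤ h z := by
    intro z
    have h1 := dt3_abs_le (f z) (f' z)
    rw [dt3_comm (f' z), ← two_mul, Real.norm_eq_abs, abs_mul, abs_two]
    simp only [hh, ← nsq]
    have : ε * ‖f' z‖^2 + ε⁻¹ * ‖f z‖^2 - 2 * (‖f z‖ * ‖f' z‖) = ε⁻¹ * (ε * ‖f' z‖ - ‖f z‖)^2 := by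
      field_simp; ring
    have h2 : 0 ≤ ε⁻¹ * (ε * ‖f' z‖ - ‖f z‖)^2 := by positivity
    linarith
  have h1 : ‖∫ z in y..x, (dt3 (f' z) (f z) + dt3 (f z) (f' z))‖ ≤ ∫ z in (0:ℝ)..1, h z := by
    refine (intervalIntegral.norm_integral_le_integral_norm_uIoc).trans ?_
    rw [intervalIntegral.integral_of_le zero_le_one]
    calc ∫ z in uIoc y x, ‖dt3 (f' z) (f z) + dt3 (f z) (f' z)‖ ≤ ∫ z in uIoc y x, h z := by
          apply MeasureTheory.integral_mono_of_nonneg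
          · exact Filter.Eventually.of_forall fun z => norm_nonneg _
          · exact (hhc.intervalIntegrable y x).def'
          · exact Filter.Eventually.of_forall hb
      _ ≤ _ := by
          apply MeasureTheory.setIntegral_mono_set
          · exact (intervalIntegrable_iff_integrableOn_Ioc_of_le zero_le_one).1 (hhc.intervalIntegrable 0 1)
          · exact Filter.Eventually.of_forall hh0
          · apply LE.le.eventuallyLE
            exact Ioc_subset_Ioc (le_min hy.1 hx.1) (max_le hy.2 hx.2)
  rw [hF, Real.norm_eq_abs] at h1
  have h2 : ∫ z in (0:ℝ)..1, h z = ε * (∫ z in (0:ℝ)..1, dt3 (f' z) (f' z)) +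
      ε⁻¹ * ∫ z in (0:ℝ)..1, dt3 (f z) (f z) := by
    rw [← intervalIntegral.integral_const_mul, ← intervalIntegral.integral_const_mul,
      ← intervalIntegral.integral_add] <;> apply Continuous.intervalIntegrable <;> fun_prop
  rw [h2] at h1
  linarith [le_abs_self (dt3 (f x) (f x) - dt3 (f y) (f y))]

lemma sup_vv {u : ℝ → ℝ → E3} (hu : Sm u) (k : ℕ) (t : ℝ) {x : ℝ} (hx : x ∈ Icc (0:ℝ) 1) :
    dt3 (vv u k x t) (vv u k x t) ≤ 2 * yy u k t + yy u (k+1) t := by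
  have h : ∀ y ∈ Icc (0:ℝ) 1, dt3 (vv u k x t) (vv u k x t) ≤ dt3 (vv u k y t) (vv u k y t) +
      (yy u (k+1) t + yy u k t) := by
    intro y hy
    have := sup_gen (fun x => vv_dx hu k x t) ((vv_sm hu (k+1)).cont_x t) one_pos hx hy
    simpa [yy] using this
  have d := continuous_dt3 ((vv_sm hu k).cont_x t) ((vv_sm hu k).cont_x t)
  have := intervalIntegral.integral_mono_on (μ := volume) (a := 0) (b := 1) zero_le_one
    (continuous_const.intervalIntegrable _ _) ((d.add continuous_const).intervalIntegrable _ _) h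
  simp only [Pi.add_apply] at this
  rw [intervalIntegral.integral_add (d.intervalIntegrable _ _) (continuous_const.intervalIntegrable _ _)] at this
  simp only [intervalIntegral.integral_const, sub_zero, one_smul] at this
  have e : ∫ x in (0:ℝ)..1, dt3 (vv u k x t) (vv u k x t) = yy u k t := rfl
  rw [e] at this
  linarith

lemma quart {u : ℝ → ℝ → E3} (hu : Sm u) (k : ℕ) (t : ℝ) {S : ℝ}
    (hS : ∀ x ∈ Icc (0:ℝ) 1, dt3 (vv u k x t) (vv u k x t) ≤ S) :
    ∫ x in (0:ℝ)..1, dt3 (vv u k x t) (vv u k x t) ^ 2 ≤ S * yy u k t := by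
  have d := continuous_dt3 ((vv_sm hu k).cont_x t) ((vv_sm hu k).cont_x t)
  unfold yy
  rw [← intervalIntegral.integral_const_mul]
  apply intervalIntegral.integral_mono_on zero_le_one ((d.pow 2).intervalIntegrable _ _)
    ((continuous_const.mul d).intervalIntegrable _ _)
  intro x hx
  rw [sq]
  exact mul_le_mul_of_nonneg_right (hS x hx) (dt3_nonneg _)

lemma lev1 {T : ℝ} {u : ℝ → ℝ → E3} (F : Facts T u) : ∀ t ∈ Icc (0:ℝ) T, yy u 1 t = yy u 1 0 :=
  const_of_deriv fun _ ht => yy1_deriv F ht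

lemma lev2 {T A : ℝ} {u : ℝ → ℝ → E3} (F : Facts T u) (h1 : yy u 1 0 ≤ A) (h2 : yy u 2 0 ≤ A) :
    ∀ t ∈ Icc (0:ℝ) T, yy u 2 t ≤ 2 * A + 25 / 4 * A ^ 2 * (A + 1) := by
  intro t ht
  have hA : 0 ≤ A := (yy_nonneg u 1 0).trans h1
  have hE := const_of_deriv (f := fun t => yy u 2 t - 5 / 4 * pp u t) (T := T) (fun t ht =>
    ((yy2_deriv F ht).fun_sub ((pp_deriv F ht).const_mul (5/4))).congr_deriv (by ring)) t ht
  have hp0 : 0 ≤ pp u 0 := intervalIntegral.integral_nonneg zero_le_one fun _ _ => sq_nonneg _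
  have hε : 0 < 2 / (5 * (A + 1)) := by positivity
  have hS : ∀ x ∈ Icc (0:ℝ) 1, dt3 (vv u 1 x t) (vv u 1 x t) ≤
      2 / (5 * (A + 1)) * yy u 2 t + (2 / (5 * (A + 1)))⁻¹ * yy u 1 t := by
    intro x hx
    have := sup_gen (fun x => vv_dx F.sm 1 x t) ((vv_sm F.sm 2).cont_x t) hε hx
      (left_mem_Icc.2 zero_le_one)
    rwa [(F.b1 t ht).1, dt3_zl, zero_add] at this
  have hq := quart F.sm 1 t hS
  have hy1 := lev1 F t ht
  have n1 := yy_nonneg u 1 0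
  have n2 := yy_nonneg u 2 t
  rw [hy1] at hq
  have hpp : pp u t ≤ (2 / (5 * (A + 1)) * yy u 2 t + (2 / (5 * (A + 1)))⁻¹ * yy u 1 0) * yy u 1 0 := hq
  have hb : (2 / (5 * (A + 1)) * yy u 2 t + (2 / (5 * (A + 1)))⁻¹ * yy u 1 0) * yy u 1 0
      ≤ (2 / (5 * (A + 1)) * yy u 2 t + (2 / (5 * (A + 1)))⁻¹ * A) * A := by gcongr
  have hc : (2 / (5 * (A + 1)) * yy u 2 t + (2 / (5 * (A + 1)))⁻¹ * A) * A =
     (2 / 5 * yy u 2 t) * (A / (A + 1)) + 5 / 2 * A ^ 2 * (A + 1) := by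
    field_simp
  have hd : A / (A + 1) ≤ 1 := by rw [div_le_one (by positivity)]; linarith
  have he : (2 / 5 * yy u 2 t) * (A / (A + 1)) ≤ 2 / 5 * yy u 2 t * 1 := by gcongr
  linarith

lemma gron {f f' : ℝ → ℝ} {T K A : ℝ} (hK : 0 ≤ K) (hf : ∀ t ∈ Icc (0:ℝ) T, HasDerivAt f (f' t) t)
    (h0 : ∀ t, 0 ≤ f t) (hA : f 0 ≤ A) (hb : ∀ t ∈ Icc (0:ℝ) T, |f' t| ≤ K * (1 + f t)) :
    ∀ t ∈ Icc (0:ℝ) T, f t ≤ (A + 1) * Real.exp (K * T) := by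
  intro t ht
  have := norm_le_gronwallBound_of_norm_deriv_right_le (f := fun t => f t + 1) (f' := f')
    (δ := A + 1) (K := K) (ε := 0) (a := 0) (b := T)
    (fun t ht => ((hf t ht).add_const 1).continuousAt.continuousWithinAt)
    (fun t ht => ((hf t ⟨ht.1, ht.2.le⟩).add_const 1).hasDerivWithinAt)
    (by rw [Real.norm_eq_abs, abs_of_nonneg (by linarith [h0 0])]; linarith)
    (fun t ht => by
      rw [Real.norm_eq_abs, Real.norm_eq_abs, abs_of_nonneg (by linarith [h0 t] : 0 ≤ f t + 1)]
      linarith [hb t ⟨ht.1, ht.2.le⟩]) t ht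
  rw [gronwallBound_ε0, Real.norm_eq_abs, abs_of_nonneg (by linarith [h0 t]), sub_zero] at this
  have h3 : Real.exp (K * t) ≤ Real.exp (K * T) := Real.exp_le_exp.2 (by gcongr; exact ht.2)
  have h4 : 0 ≤ A + 1 := by linarith [h0 0]
  nlinarith

lemma QQ_abs {w : ℕ → ℝ → E3} (P : Prof w) (k : ℕ) (hk : 1 ≤ k) {x : ℝ} (hx : x ∈ Icc (0:ℝ) 1)
    {a b : ℝ} (ha : |dt3 (w 0 x) (w k x)| ≤ a) (hb : |dt3 (w 0 x) (w (k+1) x)| ≤ b) :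
    |QQ w k x| ≤ ((k:ℝ) - 1) * ((2 * b + ‖w 1 x‖ * ‖w k x‖) * (‖w 1 x‖ * ‖w k x‖)
      + a * (‖w 2 x‖ * ‖w k x‖)) := by
  have hk' : (0:ℝ) ≤ (k:ℝ) - 1 := by
    have : (1:ℝ) ≤ k := by exact_mod_cast hk
    linarith
  have h0 := P.norm0 x hx
  have d1 := dd_abs_le (w 0 x) (w 1 x) (w k x)
  have d2 := dd_abs_le (w 0 x) (w 2 x) (w k x)
  rw [h0, one_mul] at d1 d2
  have e1 := dt3_abs_le (w 1 x) (w k x)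
  have hb0 := (abs_nonneg _).trans hb
  have ha0 := (abs_nonneg _).trans ha
  unfold QQ
  rw [abs_mul, abs_neg, abs_of_nonneg hk']
  gcongr
  refine (abs_add_le _ _).trans ?_
  rw [abs_mul, abs_mul]
  gcongr
  refine (abs_add_le _ _).trans ?_
  rw [abs_mul, abs_two]
  gcongr

lemma int_bound {f g : ℝ → ℝ} (hg : Continuous g) (h : ∀ x ∈ Icc (0:ℝ) 1, |f x| ≤ g x) :
    |∫ x in (0:ℝ)..1, f x| ≤ ∫ x in (0:ℝ)..1, g x := by
  rw [← Real.norm_eq_abs]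
  refine intervalIntegral.norm_integral_le_of_norm_le zero_le_one
    (Filter.Eventually.of_forall fun x hx => h x ⟨hx.1.le, hx.2⟩) (hg.intervalIntegrable _ _)

lemma int_add2 {f g : ℝ → ℝ} (hf : Continuous f) (hg : Continuous g) :
    ∫ x in (0:ℝ)..1, (f x + g x) = (∫ x in (0:ℝ)..1, f x) + ∫ x in (0:ℝ)..1, g x :=
  intervalIntegral.integral_add (hf.intervalIntegrable _ _) (hg.intervalIntegrable _ _)

lemma int_add3 {f g : ℝ → ℝ} (hf : Continuous f) (hg : Continuous g) :
    ∫ x in (0:ℝ)..1, (1 + f x + g x) = 1 + (∫ x in (0:ℝ)..1, f x) + ∫ x in (0:ℝ)..1, g x := by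
  rw [int_add2 (f := fun x => 1 + f x) (continuous_const.add hf) hg,
    int_add2 (f := fun _ => 1) continuous_const hf]
  simp

lemma norm_vv_le {u : ℝ → ℝ → E3} (hu : Sm u) (k : ℕ) (t : ℝ) {B : ℝ} (h1 : yy u k t ≤ B)
    (h2 : yy u (k+1) t ≤ B) {x : ℝ} (hx : x ∈ Icc (0:ℝ) 1) : ‖vv u k x t‖ ≤ 1 + 3 * B := by
  have hB := (yy_nonneg _ _ _).trans h1
  apply le_of_sq_le_sq _ (by positivity)
  rw [nsq]
  nlinarith [sup_vv hu k t hx]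

lemma abs_dt3_le' {a : E3} : |dt3 a a| ≤ ‖a‖ ^ 2 := by
  rw [nsq, abs_of_nonneg (dt3_nonneg a)]

lemma lev3 {T A B : ℝ} {u : ℝ → ℝ → E3} (F : Facts T u)
    (h1 : ∀ t ∈ Icc (0:ℝ) T, yy u 1 t ≤ B) (h2 : ∀ t ∈ Icc (0:ℝ) T, yy u 2 t ≤ B)
    (h3 : yy u 3 0 ≤ A) (hB : 0 ≤ B) :
    ∀ t ∈ Icc (0:ℝ) T, yy u 3 t ≤
      (A + 1) * Real.exp (54 * (1 + 3 * B) ^ 2 * (1 + B * (2 * B + 1)) * T) := by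
  refine gron (by positivity) (fun t ht => yy3_deriv F ht) (yy_nonneg u 3) h3 fun t ht => ?_
  have P := F.prof t ht
  have d := fun i j => continuous_dt3 (P.cont i) (P.cont j)
  set M := 1 + 3 * B with hM
  have hM1 : 1 ≤ M := by linarith
  have key := int_bound (f := fun x => 2 * (QQ (fun k x => vv u k x t) 3 x + 0))
    (g := fun x => 54 * M ^ 2 * (dt3 (vv u 3 x t) (vv u 3 x t) + dt3 (vv u 2 x t) (vv u 2 x t) ^ 2))
    (continuous_const.mul ((d 3 3).add ((d 2 2).pow 2))) (by
      intro x hx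
      have m1 := norm_vv_le F.sm 1 t (h1 t ht) (h2 t ht) hx
      rw [← hM] at m1
      have n1 := norm_nonneg (vv u 1 x t)
      have n2 := norm_nonneg (vv u 2 x t)
      have n3 := norm_nonneg (vv u 3 x t)
      have q := QQ_abs P 3 (by norm_num) hx (a := 3 * (‖vv u 1 x t‖ * ‖vv u 2 x t‖))
        (b := 4 * (‖vv u 1 x t‖ * ‖vv u 3 x t‖) + 3 * ‖vv u 2 x t‖ ^ 2)
        (by
          rw [P.con3 x hx, abs_mul]; norm_num; exact dt3_abs_le _ _)
        (by
          rw [P.con4 x hx]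
          refine (abs_sub _ _).trans ?_
          rw [abs_mul, abs_mul]; norm_num
          gcongr
          · exact dt3_abs_le _ _
          · exact abs_dt3_le')
      rw [add_zero, abs_mul, abs_two, ← nsq, ← nsq]
      norm_num at q
      have : 2 * ((2 * (4 * (‖vv u 1 x t‖ * ‖vv u 3 x t‖) + 3 * ‖vv u 2 x t‖ ^ 2) + ‖vv u 1 x t‖ * ‖vv u 3 x t‖) *
          (‖vv u 1 x t‖ * ‖vv u 3 x t‖) + 3 * (‖vv u 1 x t‖ * ‖vv u 2 x t‖) * (‖vv u 2 x t‖ * ‖vv u 3 x t‖))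
        ≤ 2 * ((2 * (4 * (M * ‖vv u 3 x t‖) + 3 * ‖vv u 2 x t‖ ^ 2) + M * ‖vv u 3 x t‖) *
          (M * ‖vv u 3 x t‖) + 3 * (M * ‖vv u 2 x t‖) * (‖vv u 2 x t‖ * ‖vv u 3 x t‖)) := by
        gcongr
      generalize ‖vv u 2 x t‖ = p at *
      generalize ‖vv u 3 x t‖ = r at *
      have i1 : 0 ≤ (M^2 - M) * (r^2 + (p^2)^2) := mul_nonneg (by nlinarith) (by positivity)
      have i2 : 0 ≤ M * (r - p^2)^2 := by positivity
      have i3 : 0 ≤ M^2 * (p^2)^2 := by positivity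
      nlinarith)
  have e : ∫ x in (0:ℝ)..1, 54 * M ^ 2 * (dt3 (vv u 3 x t) (vv u 3 x t) + dt3 (vv u 2 x t) (vv u 2 x t) ^ 2)
      = 54 * M^2 * (yy u 3 t + ∫ x in (0:ℝ)..1, dt3 (vv u 2 x t) (vv u 2 x t) ^ 2) := by
    rw [intervalIntegral.integral_const_mul, int_add2 (d 3 3) (g := fun x => dt3 (vv u 2 x t) (vv u 2 x t) ^ 2) ((d 2 2).pow 2)]
    rfl
  rw [e] at key
  have hq := quart F.sm 2 t (S := 2 * B + yy u 3 t) (fun x hx => by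
    have := sup_vv F.sm 2 t hx
    linarith [h2 t ht])
  have n3 := yy_nonneg u 3 t
  have hq2 : (2 * B + yy u 3 t) * yy u 2 t ≤ (2 * B + yy u 3 t) * B := by
    gcongr; exact h2 t ht
  refine key.trans ?_
  rw [mul_assoc (54 * M^2)]
  gcongr
  have := mul_nonneg hB n3
  have := mul_nonneg (mul_nonneg hB hB) n3
  nlinarith

lemma lev4 {T A B : ℝ} {u : ℝ → ℝ → E3} (F : Facts T u)
    (h1 : ∀ t ∈ Icc (0:ℝ) T, yy u 1 t ≤ B) (h2 : ∀ t ∈ Icc (0:ℝ) T, yy u 2 t ≤ B)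
    (h3 : ∀ t ∈ Icc (0:ℝ) T, yy u 3 t ≤ B)
    (h4 : yy u 4 0 ≤ A) (hB : 0 ≤ B) :
    ∀ t ∈ Icc (0:ℝ) T, yy u 4 t ≤
      (A + 1) * Real.exp (150 * (1 + 3 * B) ^ 3 * (1 + B) * T) := by
  refine gron (by positivity) (fun t ht => yy4_deriv F ht) (yy_nonneg u 4) h4 fun t ht => ?_
  have P := F.prof t ht
  have d := fun i j => continuous_dt3 (P.cont i) (P.cont j)
  set M := 1 + 3 * B with hM
  have hM1 : 1 ≤ M := by linarith
  have key := int_bound (f := fun x => 2 * (QQ (fun k x => vv u k x t) 4 x + 0))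
    (g := fun x => 150 * M ^ 3 * (1 + dt3 (vv u 3 x t) (vv u 3 x t) + dt3 (vv u 4 x t) (vv u 4 x t)))
    (continuous_const.mul ((continuous_const.add (d 3 3)).add (d 4 4))) (by
      intro x hx
      have m1 := norm_vv_le F.sm 1 t (h1 t ht) (h2 t ht) hx
      have m2 := norm_vv_le F.sm 2 t (h2 t ht) (h3 t ht) hx
      rw [← hM] at m1 m2
      have n1 := norm_nonneg (vv u 1 x t)
      have n2 := norm_nonneg (vv u 2 x t)
      have n3 := norm_nonneg (vv u 3 x t)
      have n4 := norm_nonneg (vv u 4 x t)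
      have q := QQ_abs P 4 (by norm_num) hx
        (a := 4 * (‖vv u 1 x t‖ * ‖vv u 3 x t‖) + 3 * ‖vv u 2 x t‖ ^ 2)
        (b := 5 * (‖vv u 1 x t‖ * ‖vv u 4 x t‖) + 10 * (‖vv u 2 x t‖ * ‖vv u 3 x t‖))
        (by
          rw [P.con4 x hx]
          refine (abs_sub _ _).trans ?_
          rw [abs_mul, abs_mul]; norm_num
          gcongr
          · exact dt3_abs_le _ _
          · exact abs_dt3_le')
        (by
          rw [P.con5 x hx]
          refine (abs_sub _ _).trans ?_
          rw [abs_mul, abs_mul]; norm_num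
          gcongr
          · exact dt3_abs_le _ _
          · exact dt3_abs_le _ _)
      rw [add_zero, abs_mul, abs_two, ← nsq, ← nsq]
      norm_num at q
      have q2 := q.trans (b := _) (c := 3 * ((2 * (5 * (M * ‖vv u 4 x t‖) + 10 * (M * ‖vv u 3 x t‖)) + M * ‖vv u 4 x t‖) *
          (M * ‖vv u 4 x t‖) + (4 * (M * ‖vv u 3 x t‖) + 3 * M ^ 2) * (M * ‖vv u 4 x t‖))) (by gcongr)
      generalize ‖vv u 3 x t‖ = p at *
      generalize ‖vv u 4 x t‖ = r at *
      have i1 : 0 ≤ (M - 1) * (M ^ 2 * (r^2 + p^2)) := mul_nonneg (by linarith) (by positivity)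
      have i1' : 0 ≤ (M - 1) * (M ^ 2 * r^2) := mul_nonneg (by linarith) (by positivity)
      have i2 : 0 ≤ M ^ 2 * (r - p)^2 := by positivity
      have i3 : 0 ≤ M^3 * (r - 1)^2 := by positivity
      have i4 : 0 ≤ M^3 * r^2 := by positivity
      have i5 : 0 ≤ M^3 * p^2 := by positivity
      have i6 : 0 ≤ M^3 := by positivity
      linarith)
  have e : ∫ x in (0:ℝ)..1, 150 * M ^ 3 * (1 + dt3 (vv u 3 x t) (vv u 3 x t) + dt3 (vv u 4 x t) (vv u 4 x t))
      = 150 * M^3 * (1 + yy u 3 t + yy u 4 t) := by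
    rw [intervalIntegral.integral_const_mul, int_add3 (d 3 3) (d 4 4)]
    rfl
  rw [e] at key
  have n4 := yy_nonneg u 4 t
  refine key.trans ?_
  rw [mul_assoc (150 * M^3)]
  gcongr
  nlinarith [h3 t ht, mul_nonneg hB n4]

lemma lev5 {T A B : ℝ} {u : ℝ → ℝ → E3} (F : Facts T u)
    (h1 : ∀ t ∈ Icc (0:ℝ) T, yy u 1 t ≤ B) (h2 : ∀ t ∈ Icc (0:ℝ) T, yy u 2 t ≤ B)
    (h3 : ∀ t ∈ Icc (0:ℝ) T, yy u 3 t ≤ B) (h4 : ∀ t ∈ Icc (0:ℝ) T, yy u 4 t ≤ B)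
    (h5 : yy u 5 0 ≤ A) (hB : 0 ≤ B) :
    ∀ t ∈ Icc (0:ℝ) T, yy u 5 t ≤
      (A + 1) * Real.exp (400 * (1 + 3 * B) ^ 3 * (1 + B) * T) := by
  refine gron (by positivity) (fun t ht => yy5_deriv F ht) (yy_nonneg u 5) h5 fun t ht => ?_
  have P := F.prof t ht
  have d := fun i j => continuous_dt3 (P.cont i) (P.cont j)
  set M := 1 + 3 * B with hM
  have hM1 : 1 ≤ M := by linarith
  have key := int_bound (f := fun x => 2 * (QQ (fun k x => vv u k x t) 5 x +
      5 * dd (vv u 5 x t) (vv u 3 x t) (vv u 4 x t)))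
    (g := fun x => 400 * M ^ 3 * (1 + dt3 (vv u 4 x t) (vv u 4 x t) + dt3 (vv u 5 x t) (vv u 5 x t)))
    (continuous_const.mul ((continuous_const.add (d 4 4)).add (d 5 5))) (by
      intro x hx
      have m1 := norm_vv_le F.sm 1 t (h1 t ht) (h2 t ht) hx
      have m2 := norm_vv_le F.sm 2 t (h2 t ht) (h3 t ht) hx
      have m3 := norm_vv_le F.sm 3 t (h3 t ht) (h4 t ht) hx
      rw [← hM] at m1 m2 m3
      have n1 := norm_nonneg (vv u 1 x t)
      have n2 := norm_nonneg (vv u 2 x t)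
      have n3 := norm_nonneg (vv u 3 x t)
      have n4 := norm_nonneg (vv u 4 x t)
      have n5 := norm_nonneg (vv u 5 x t)
      have q := QQ_abs P 5 (by norm_num) hx
        (a := 5 * (‖vv u 1 x t‖ * ‖vv u 4 x t‖) + 10 * (‖vv u 2 x t‖ * ‖vv u 3 x t‖))
        (b := 6 * (‖vv u 1 x t‖ * ‖vv u 5 x t‖) + 15 * (‖vv u 2 x t‖ * ‖vv u 4 x t‖)
          + 10 * ‖vv u 3 x t‖ ^ 2)
        (by
          rw [P.con5 x hx]
          refine (abs_sub _ _).trans ?_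
          rw [abs_mul, abs_mul]; norm_num
          gcongr
          · exact dt3_abs_le _ _
          · exact dt3_abs_le _ _)
        (by
          rw [P.con6 x hx]
          refine (abs_sub _ _).trans ?_
          refine (add_le_add_left (abs_sub _ _) _).trans ?_
          rw [abs_mul, abs_mul, abs_mul]; norm_num
          gcongr
          · exact dt3_abs_le _ _
          · exact dt3_abs_le _ _
          · exact abs_dt3_le')
      have z := dd_abs_le (vv u 5 x t) (vv u 3 x t) (vv u 4 x t)
      rw [abs_mul, abs_two, ← nsq, ← nsq]
      have tr := abs_add_le (QQ (fun k x => vv u k x t) 5 x) (5 * dd (vv u 5 x t) (vv u 3 x t) (vv u 4 x t))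
      rw [abs_mul 5, abs_of_nonneg (by norm_num : (0:ℝ) ≤ 5)] at tr
      norm_num at q
      have q2 := q.trans (b := _) (c := 4 * ((2 * (6 * (M * ‖vv u 5 x t‖) + 15 * (M * ‖vv u 4 x t‖) + 10 * M ^ 2) + M * ‖vv u 5 x t‖) *
          (M * ‖vv u 5 x t‖) + (5 * (M * ‖vv u 4 x t‖) + 10 * (M * M)) * (M * ‖vv u 5 x t‖))) (by gcongr)
      have z2 := z.trans (b := _) (c := ‖vv u 5 x t‖ * (M * ‖vv u 4 x t‖)) (by gcongr)
      generalize ‖vv u 4 x t‖ = p at *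
      generalize ‖vv u 5 x t‖ = r at *
      have i1 : 0 ≤ (M - 1) * (M ^ 2 * (r^2 + p^2)) := mul_nonneg (by linarith) (by positivity)
      have i1' : 0 ≤ (M - 1) * (M ^ 2 * r^2) := mul_nonneg (by linarith) (by positivity)
      have i1'' : 0 ≤ (M - 1) * (M * (r^2 + p^2)) := mul_nonneg (by linarith) (by positivity)
      have i2 : 0 ≤ M ^ 2 * (r - p)^2 := by positivity
      have i2' : 0 ≤ M * (r - p)^2 := by positivity
      have i3 : 0 ≤ M^3 * (r - 1)^2 := by positivity
      have i4 : 0 ≤ M^3 * r^2 := by positivity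
      have i5 : 0 ≤ M^3 * p^2 := by positivity
      have i6 : 0 ≤ M^3 := by positivity
      linarith)
  have e : ∫ x in (0:ℝ)..1, 400 * M ^ 3 * (1 + dt3 (vv u 4 x t) (vv u 4 x t) + dt3 (vv u 5 x t) (vv u 5 x t))
      = 400 * M^3 * (1 + yy u 4 t + yy u 5 t) := by
    rw [intervalIntegral.integral_const_mul, int_add3 (d 4 4) (d 5 5)]
    rfl
  rw [e] at key
  have n5 := yy_nonneg u 5 t
  refine key.trans ?_
  rw [mul_assoc (400 * M^3)]
  gcongr
  nlinarith [h4 t ht, mul_nonneg hB n5]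

lemma sq_int_le {u : ℝ → ℝ → E3} (hu : Sm u) {t K : ℝ} {g : ℝ → E3}
    (hg : ∀ x ∈ Icc (0:ℝ) 1, ‖g x‖ ≤ K + ‖vv u 5 x t‖) :
    ∫ x in (0:ℝ)..1, ‖g x‖ ^ 2 ≤ 2 * K ^ 2 + 2 * yy u 5 t := by
  have d := continuous_dt3 ((vv_sm hu 5).cont_x t) ((vv_sm hu 5).cont_x t)
  have h := int_bound (f := fun x => ‖g x‖ ^ 2)
    (g := fun x => 2 * K ^ 2 + 2 * dt3 (vv u 5 x t) (vv u 5 x t))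
    (continuous_const.add (continuous_const.mul d)) (by
      intro x hx
      rw [abs_of_nonneg (by positivity), ← nsq]
      have h1 := hg x hx
      have h2 : ‖g x‖ ^ 2 ≤ (K + ‖vv u 5 x t‖) ^ 2 := by gcongr
      nlinarith [sq_nonneg (K - ‖vv u 5 x t‖)])
  rw [int_add2 (f := fun _ => 2 * K ^ 2) (g := fun x => 2 * dt3 (vv u 5 x t) (vv u 5 x t))
    continuous_const (continuous_const.mul d),
    intervalIntegral.integral_const_mul] at h
  refine (le_abs_self _).trans (h.trans_eq ?_)
  simp [yy]

lemma Hsq_eq (k : ℕ) (f : ℝ → ℝ → E3) (t : ℝ) : Hsq k (fun x => f x t) =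
    ∑ j ∈ Finset.range (k+1), ∫ x in (0:ℝ)..1, ‖vv f j x t‖ ^ 2 := by
  unfold Hsq
  simp only [deriv_iter_eq f t]

lemma yy_eq (u : ℝ → ℝ → E3) (k : ℕ) (t : ℝ) : ∫ x in (0:ℝ)..1, ‖vv u k x t‖ ^ 2 = yy u k t := by
  simp only [yy, nsq]

lemma n_cross {a b : E3} {p q : ℝ} (ha : ‖a‖ ≤ p) (hb : ‖b‖ ≤ q) : ‖cross3 a b‖ ≤ p * q :=
  (cross_norm_le a b).trans (mul_le_mul ha hb (norm_nonneg _) ((norm_nonneg _).trans ha))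

lemma n_smul {a : E3} {r p : ℝ} (hr : 0 ≤ r) (ha : ‖a‖ ≤ p) : ‖r • a‖ ≤ r * p := by
  rw [norm_smul, Real.norm_eq_abs, abs_of_nonneg hr]; gcongr

lemma n_add {a b : E3} {p q : ℝ} (ha : ‖a‖ ≤ p) (hb : ‖b‖ ≤ q) : ‖a + b‖ ≤ p + q :=
  (norm_add_le a b).trans (add_le_add ha hb)

lemma final_bound {T B : ℝ} (hT : 0 < T) {u : ℝ → ℝ → E3} (F : Facts T u) (hB : 0 ≤ B)
    (hy : ∀ k, 1 ≤ k → k ≤ 5 → ∀ t ∈ Icc (0:ℝ) T, yy u k t ≤ B) :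
    ∀ t ∈ Icc (0:ℝ) T, Hsq 5 (fun x => u x t) + Hsq 3 (fun x => pdt u x t)
            + Hsq 1 (fun x => pdt (pdt u) x t) ≤
      1 + 5 * B + 6 * (2 * (11 * (1 + 3 * B) ^ 3) ^ 2 + 2 * B) := by
  intro t ht
  have P := F.prof t ht
  set M := 1 + 3 * B with hM
  have hM1 : 1 ≤ M := by linarith
  have hM2 : M ≤ M ^ 2 := by nlinarith
  have hM3 : M ^ 2 ≤ M ^ 3 := by nlinarith [sq_nonneg M]
  have m : ∀ k, 1 ≤ k → k ≤ 4 → ∀ x ∈ Icc (0:ℝ) 1, ‖vv u k x t‖ ≤ M := fun k h1 h2 x hx =>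
    norm_vv_le F.sm k t (hy k h1 (by omega) t ht) (hy (k+1) (by omega) (by omega) t ht) hx
  have m0 : ∀ x ∈ Icc (0:ℝ) 1, ‖vv u 0 x t‖ ≤ 1 := fun x hx => (P.norm0 x hx).le
  have m1 := m 1 (by norm_num) (by norm_num)
  have m2 := m 2 (by norm_num) (by norm_num)
  have m3 := m 3 (by norm_num) (by norm_num)
  have m4 := m 4 (by norm_num) (by norm_num)
  have R0 : ∀ x ∈ Icc (0:ℝ) 1, ‖pdt (vv u 0) x t‖ ≤ 1 * M := fun x hx => by
    rw [F.r0 x hx t ht]; exact n_cross (m0 x hx) (m2 x hx)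
  have R1 : ∀ x ∈ Icc (0:ℝ) 1, ‖pdt (vv u 1) x t‖ ≤ M * M + 1 * M := fun x hx => by
    rw [F.r1 x hx t ht]; exact n_add (n_cross (m1 x hx) (m2 x hx)) (n_cross (m0 x hx) (m3 x hx))
  have R2 : ∀ x ∈ Icc (0:ℝ) 1, ‖pdt (vv u 2) x t‖ ≤ 2 * (M * M) + 1 * M := fun x hx => by
    rw [F.r2 x hx t ht]
    exact n_add (n_smul (by norm_num) (n_cross (m1 x hx) (m3 x hx))) (n_cross (m0 x hx) (m4 x hx))
  have R3 : ∀ x ∈ Icc (0:ℝ) 1, ‖pdt (vv u 3) x t‖ ≤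
      2 * (M * M) + 3 * (M * M) + 1 * ‖vv u 5 x t‖ := fun x hx => by
    rw [F.r3 x hx t ht]
    exact n_add (n_add (n_smul (by norm_num) (n_cross (m2 x hx) (m3 x hx)))
      (n_smul (by norm_num) (n_cross (m1 x hx) (m4 x hx)))) (n_cross (m0 x hx) le_rfl)
  have S0 : ∀ x ∈ Icc (0:ℝ) 1, ‖pdt (pdt (vv u 0)) x t‖ ≤ 1 * M * M + 1 * (2 * (M * M) + 1 * M) := by
    intro x hx
    rw [deriv_eq_of_eqOn hT ht (fun s hs => F.r0 x hx s hs) ((vv_sm F.sm 0).pdt.dt x t)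
      (hasDerivAt_cross ((vv_sm F.sm 0).dt x t) ((vv_sm F.sm 2).dt x t))]
    exact n_add (n_cross (R0 x hx) (m2 x hx)) (n_cross (m0 x hx) (R2 x hx))
  have S1 : ∀ x ∈ Icc (0:ℝ) 1, ‖pdt (pdt (vv u 1)) x t‖ ≤
      ((M * M + 1 * M) * M + M * (2 * (M * M) + 1 * M)) +
      (1 * M * M + 1 * (2 * (M * M) + 3 * (M * M) + 1 * ‖vv u 5 x t‖)) := by
    intro x hx
    rw [deriv_eq_of_eqOn hT ht (fun s hs => F.r1 x hx s hs) ((vv_sm F.sm 1).pdt.dt x t)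
      ((hasDerivAt_cross ((vv_sm F.sm 1).dt x t) ((vv_sm F.sm 2).dt x t)).fun_add
        (hasDerivAt_cross ((vv_sm F.sm 0).dt x t) ((vv_sm F.sm 3).dt x t)))]
    exact n_add (n_add (n_cross (R1 x hx) (m2 x hx)) (n_cross (m1 x hx) (R2 x hx)))
      (n_add (n_cross (R0 x hx) (m3 x hx)) (n_cross (m0 x hx) (R3 x hx)))
  have hy5 := hy 5 (by norm_num) le_rfl t ht
  have fin : ∀ g : ℝ → E3, (∀ x ∈ Icc (0:ℝ) 1, ‖g x‖ ≤ 11 * M ^ 3 + ‖vv u 5 x t‖) →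
      ∫ x in (0:ℝ)..1, ‖g x‖ ^ 2 ≤ 2 * (11 * M ^ 3) ^ 2 + 2 * B := fun g hg =>
    (sq_int_le F.sm hg).trans (by linarith)
  have n5 := fun x => norm_nonneg (vv u 5 x t)
  have f0 := fin (fun x => pdt (vv u 0) x t) fun x hx => by linarith [R0 x hx, n5 x]
  have f1 := fin (fun x => pdt (vv u 1) x t) fun x hx => by linarith [R1 x hx, n5 x]
  have f2 := fin (fun x => pdt (vv u 2) x t) fun x hx => by linarith [R2 x hx, n5 x]
  have f3 := fin (fun x => pdt (vv u 3) x t) fun x hx => by linarith [R3 x hx, n5 x]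
  have g0 := fin (fun x => pdt (pdt (vv u 0)) x t) fun x hx => by linarith [S0 x hx, n5 x]
  have g1 := fin (fun x => pdt (pdt (vv u 1)) x t) fun x hx => by linarith [S1 x hx, n5 x]
  have z : ∫ x in (0:ℝ)..1, ‖vv u 0 x t‖ ^ 2 = 1 := by
    have : ∫ x in (0:ℝ)..1, ‖vv u 0 x t‖ ^ 2 = ∫ x in (0:ℝ)..1, (1:ℝ) := by
      apply intervalIntegral.integral_congr
      intro x hx
      rw [uIcc_of_le zero_le_one] at hx
      have : ‖vv u 0 x t‖ = 1 := P.norm0 x hx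
      simp [this]
    rw [this]; simp
  rw [Hsq_eq 5 u, Hsq_eq 3 (pdt u), Hsq_eq 1 (pdt (pdt u))]
  simp only [vv_pdt F.sm.pdt, vv_pdt F.sm, Finset.sum_range_succ, Finset.sum_range_zero, z]
  simp only [yy_eq]
  linarith [hy 1 (by norm_num) (by norm_num) t ht, hy 2 (by norm_num) (by norm_num) t ht,
    hy 3 (by norm_num) (by norm_num) t ht, hy 4 (by norm_num) (by norm_num) t ht]

lemma main_aux (A T : ℝ) : ∃ C : ℝ, ∀ u : ℝ → ℝ → E3, 0 < T → IsSol T u →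
    Hsq 5 (fun x => u x 0) ≤ A → ∀ t ∈ Icc (0:ℝ) T,
        Hsq 5 (fun x => u x t) + Hsq 3 (fun x => pdt u x t)
            + Hsq 1 (fun x => pdt (pdt u) x t) ≤ C := by
  obtain ⟨B2, hB2⟩ : ∃ B2, B2 = max A (2 * A + 25 / 4 * A ^ 2 * (A + 1)) := ⟨_, rfl⟩
  obtain ⟨B3, hB3⟩ : ∃ B3, B3 = max B2
    ((A + 1) * Real.exp (54 * (1 + 3 * B2) ^ 2 * (1 + B2 * (2 * B2 + 1)) * T)) := ⟨_, rfl⟩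
  obtain ⟨B4, hB4⟩ : ∃ B4, B4 = max B3
    ((A + 1) * Real.exp (150 * (1 + 3 * B3) ^ 3 * (1 + B3) * T)) := ⟨_, rfl⟩
  obtain ⟨B5, hB5⟩ : ∃ B5, B5 = max B4
    ((A + 1) * Real.exp (400 * (1 + 3 * B4) ^ 3 * (1 + B4) * T)) := ⟨_, rfl⟩
  refine ⟨1 + 5 * B5 + 6 * (2 * (11 * (1 + 3 * B5) ^ 3) ^ 2 + 2 * B5), fun u hT hs hA => ?_⟩
  have F := facts hT hs
  have a : ∀ k, k ≤ 5 → yy u k 0 ≤ A := by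
    intro k hk
    refine le_trans ?_ hA
    rw [Hsq_eq 5 u]
    simp only [yy_eq]
    exact Finset.single_le_sum (f := fun k => yy u k 0) (fun i _ => yy_nonneg u i 0)
      (Finset.mem_range.2 (by omega))
  have hA0 : 0 ≤ A := (yy_nonneg u 1 0).trans (a 1 (by norm_num))
  have l12 : A ≤ B2 := hB2 ▸ le_max_left _ _
  have l23 : B2 ≤ B3 := hB3 ▸ le_max_left _ _
  have l34 : B3 ≤ B4 := hB4 ▸ le_max_left _ _
  have l45 : B4 ≤ B5 := hB5 ▸ le_max_left _ _
  have y1 : ∀ t ∈ Icc (0:ℝ) T, yy u 1 t ≤ A := fun t ht =>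
    (lev1 F t ht).le.trans (a 1 (by norm_num))
  have y2 : ∀ t ∈ Icc (0:ℝ) T, yy u 2 t ≤ B2 := fun t ht =>
    (lev2 F (a 1 (by norm_num)) (a 2 (by norm_num)) t ht).trans (hB2 ▸ le_max_right _ _)
  have y3 : ∀ t ∈ Icc (0:ℝ) T, yy u 3 t ≤ B3 := fun t ht =>
    (lev3 F (fun t ht => (y1 t ht).trans l12) y2 (a 3 (by norm_num)) (by linarith) t ht).trans
      (hB3 ▸ le_max_right _ _)
  have y4 : ∀ t ∈ Icc (0:ℝ) T, yy u 4 t ≤ B4 := fun t ht =>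
    (lev4 F (fun t ht => (y1 t ht).trans (by linarith)) (fun t ht => (y2 t ht).trans (by linarith))
      y3 (a 4 (by norm_num)) (by linarith) t ht).trans (hB4 ▸ le_max_right _ _)
  have y5 : ∀ t ∈ Icc (0:ℝ) T, yy u 5 t ≤ B5 := fun t ht =>
    (lev5 F (fun t ht => (y1 t ht).trans (by linarith)) (fun t ht => (y2 t ht).trans (by linarith))
      (fun t ht => (y3 t ht).trans (by linarith))
      y4 (a 5 (by norm_num)) (by linarith) t ht).trans (hB5 ▸ le_max_right _ _)
  refine final_bound hT F (by linarith) fun k h1 h5 t ht => ?_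
  have := y1 t ht
  have := y2 t ht
  have := y3 t ht
  have := y4 t ht
  have := y5 t ht
  interval_cases k <;> linarith

theorem H5_estimate_schrodinger_flow :
    ∃ C : ℝ → ℝ → ℝ, ∀ T > (0:ℝ), ∀ u : ℝ → ℝ → E3, IsSol T u →
      ∀ t ∈ Icc (0:ℝ) T,
        Hsq 5 (fun x => u x t) + Hsq 3 (fun x => pdt u x t)
            + Hsq 1 (fun x => pdt (pdt u) x t)
          ≤ C (Real.sqrt (Hsq 5 (fun x => u x 0))) T := by
  choose C hC using main_aux
  refine ⟨fun s T => C (s ^ 2) T, fun T hT u hs t ht => hC _ T u hT hs ?_ t ht⟩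
  rw [Real.sq_sqrt]
  exact Finset.sum_nonneg fun i _ => intervalIntegral.integral_nonneg zero_le_one
    fun _ _ => by positivity

end
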